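/- Let t ↦ X(t) be a continuous map from [0,1] into the space of r × r complex matrices. Then there exist continuous functions λ_1(t),…,λ_r(t) on [0,1] such that for each t ∈ [0,1], the numbers λ_1(t),…,λ_r(t) are the eigenvalues of X(t) counted with algebraic multiplicity. -/

import Mathlib

/-!
The coefficients of `∏ (u - aᵢ)` depend on the root tuple `a` through a map which is open and
closed and whose fibres, the orbits of the symmetric group, are finite. Every map of this kind on a
metric space lifts paths, and lifting the path of characteristic polynomials proves the theorem.

For path lifting, take for each `ε > 0` a possibly discontinuous lift of the path in which the
points over `s` and `t` are joined by an `ε`-chain lying over the segment of the path between `s`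
and `t`. As `ε → 0`, an ultrafilter selects one point in each finite fibre. The selection is
continuous at `t`: the finite fibre over `t` misses a small annulus around the selected point, hence
so do all nearby fibres because the map is closed, and an `ε`-chain with `ε` less than the width of
the annulus cannot jump across it.
-/

open Filter Metric Set Topology
open scoped Polynomial unitInterval

section PathLifting

variable {Y Z : Type*}

/-- Points joined by an `ε`-chain in `S`: a finite sequence of points of `S` with consecutive
distances less than `ε`. It is encoded as a reflexive transitive closure, so every point, in `S` or
not, is joined to itself. -/
def EpsChainIn [PseudoMetricSpace Y] (ε : ℝ) (S : Set Y) : Y → Y → Prop :=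
  Relation.ReflTransGen fun x y => x ∈ S ∧ y ∈ S ∧ dist x y < ε

namespace EpsChainIn

variable [PseudoMetricSpace Y] {ε ε' : ℝ} {S T : Set Y} {x y : Y}

theorem of_dist_lt (hx : x ∈ S) (hy : y ∈ S) (hxy : dist x y < ε) : EpsChainIn ε S x y :=
  .single ⟨hx, hy, hxy⟩

theorem symm (h : EpsChainIn ε S x y) : EpsChainIn ε S y x :=
  (Relation.ReflTransGen.swap _ _ h).lift id fun (u v : Y) ⟨hv, hu, hvu⟩ =>
    ⟨hu, hv, (dist_comm u v).trans_lt hvu⟩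

theorem mono (hε : ε ≤ ε') (hST : S ⊆ T) (h : EpsChainIn ε S x y) : EpsChainIn ε' T x y :=
  h.lift id fun _ _ ⟨hx, hy, hxy⟩ => ⟨hST hx, hST hy, hxy.trans_le hε⟩

theorem dist_lt_of_disjoint_annulus {r : ℝ} (hεr : 2 * ε ≤ r) (hε : 0 < ε)
    (hS : Disjoint S (closedBall x r \ ball x ε)) (h : EpsChainIn ε S x y) : dist y x < ε := by
  induction h with
  | refl => simpa using hε
  | @tail y z _ hyz hy =>
    obtain ⟨-, hz, hdist⟩ := hyz
    have hzr : dist z x ≤ r := by linarith [dist_triangle z y x, dist_comm y z]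
    by_contra hzε
    exact hS.le_bot ⟨hz, hzr, hzε⟩

end EpsChainIn

variable {π : Y → Z}

theorem exists_nhds_forall_epsChainIn_dist_lt [MetricSpace Y] [TopologicalSpace Z]
    (hclosed : IsClosedMap π) {y₀ : Y} (hfin : (π ⁻¹' {π y₀}).Finite) {ρ : ℝ} (hρ : 0 < ρ) :
    ∃ ε > 0, ∃ V ∈ 𝓝 (π y₀), ∀ y, EpsChainIn ε (π ⁻¹' V) y₀ y → dist y y₀ < ρ := by
  have hisolated : (π ⁻¹' {π y₀} \ {y₀})ᶜ ∈ 𝓝 y₀ :=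
    hfin.sdiff.isClosed.isOpen_compl.mem_nhds (by simp)
  obtain ⟨r, hr, hball⟩ :=
    nhds_basis_closedBall.mem_iff.1 (inter_mem hisolated (ball_mem_nhds y₀ hρ))
  let A : Set Y := closedBall y₀ r \ ball y₀ (r / 2)
  have hA : IsClosed A := isClosed_closedBall.sdiff isOpen_ball
  have hfibre : π y₀ ∉ π '' A := by
    rintro ⟨y, ⟨hyr, hy⟩, hπy⟩
    refine (hball hyr).1 ⟨hπy, fun hyy₀ => hy ?_⟩
    rw [mem_singleton_iff.1 hyy₀]
    exact mem_ball_self (half_pos hr)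
  refine ⟨r / 2, half_pos hr, (π '' A)ᶜ, (hclosed A hA).isOpen_compl.mem_nhds hfibre,
    fun y hy => (hball ?_).2⟩
  have hdisj : Disjoint (π ⁻¹' (π '' A)ᶜ) A :=
    disjoint_left.2 fun z hz hzA => hz (mem_image_of_mem π hzA)
  have hdist := hy.dist_lt_of_disjoint_annulus (by linarith) (half_pos hr) hdisj
  exact mem_closedBall.2 (by linarith)

theorem exists_isOpen_forall_exists_dist_lt [PseudoMetricSpace Y] [TopologicalSpace Z]
    (hopen : IsOpenMap π) (hclosed : IsClosedMap π) {z₀ : Z} (hfin : (π ⁻¹' {z₀}).Finite)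
    {ε : ℝ} (hε : 0 < ε) :
    ∃ V, IsOpen V ∧ z₀ ∈ V ∧ ∀ y, π y ∈ V → ∀ z ∈ V, ∃ y', π y' = z ∧ dist y y' < ε := by
  let U : Set Y := ⋃ x ∈ π ⁻¹' {z₀}, ball x (ε / 2)
  let V : Set Z := (⋂ x ∈ π ⁻¹' {z₀}, π '' ball x (ε / 2)) ∩ (π '' Uᶜ)ᶜ
  have hmem : ∀ x : Y, x ∈ ball x (ε / 2) := fun x => mem_ball_self (half_pos hε)
  have hU : IsOpen U := isOpen_biUnion fun _ _ => isOpen_ball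
  have hV : IsOpen V := (hfin.isOpen_biInter fun x _ => hopen _ isOpen_ball).inter
    (hclosed _ hU.isClosed_compl).isOpen_compl
  refine ⟨V, hV, ⟨mem_iInter₂.2 fun x hx => ⟨x, hmem x, hx⟩, ?_⟩, fun y hy z hz => ?_⟩
  · rintro ⟨x, hxU, hx⟩
    exact hxU (mem_biUnion hx (hmem x))
  · have hyU : y ∈ U := by_contra fun h => hy.2 (mem_image_of_mem π h)
    obtain ⟨x, hx, hyx⟩ := mem_iUnion₂.1 hyU
    obtain ⟨y', hy'x, rfl⟩ := mem_iInter₂.1 hz.1 x hx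
    refine ⟨y', rfl, ?_⟩
    linarith [dist_triangle_right y y' x, mem_ball.1 hyx, mem_ball.1 hy'x]

/-- `f` lifts `γ` through `π` on `[0, b]`, possibly discontinuously, with jumps controlled at
scale `ε`: any two values of `f` are joined by an `ε`-chain over the segment of `γ` between them. -/
structure IsEpsLiftUpTo [PseudoMetricSpace Y] (π : Y → Z) (γ : I → Z) (ε : ℝ) (b : I)
    (f : I → Y) : Prop where
  map_eq : ∀ t ≤ b, π (f t) = γ t
  chain : ∀ s t, s ≤ t → t ≤ b → EpsChainIn ε (π ⁻¹' (γ '' Icc s t)) (f s) (f t)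

theorem IsEpsLiftUpTo.exists_extend [PseudoMetricSpace Y] {γ : I → Z} {ε : ℝ} {b c : I}
    {f : I → Y} (hf : IsEpsLiftUpTo π γ ε b f) {V : Set Z} (hbc : b ≤ c)
    (hγ : MapsTo γ (Icc b c) V)
    (hV : ∀ y, π y ∈ V → ∀ z ∈ V, ∃ y', π y' = z ∧ dist y y' < ε / 2) :
    ∃ g, IsEpsLiftUpTo π γ ε c g ∧ EqOn g f (Iic b) := by
  have hb : π (f b) ∈ V := hf.map_eq b le_rfl ▸ hγ ⟨le_rfl, hbc⟩
  have hnear : ∀ t, ∃ y, t ∈ Icc b c → π y = γ t ∧ dist (f b) y < ε / 2 := fun t => by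
    by_cases ht : t ∈ Icc b c
    · exact (hV _ hb _ (hγ ht)).imp fun y hy _ => hy
    · exact ⟨f b, fun h => absurd h ht⟩
  choose h hh using hnear
  have hle : ∀ {t}, t ≤ b → (Iic b).piecewise f h t = f t := fun ht =>
    piecewise_eq_of_mem (Iic b) f h ht
  have hgt : ∀ {t}, b < t → (Iic b).piecewise f h t = h t := fun ht =>
    piecewise_eq_of_notMem (Iic b) f h ht.not_ge
  refine ⟨(Iic b).piecewise f h, ⟨fun t htc => ?_, fun s t hst htc => ?_⟩, fun t => hle⟩
  · rcases le_or_gt t b with htb | hbt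
    · rw [hle htb, hf.map_eq t htb]
    · rw [hgt hbt, (hh t ⟨hbt.le, htc⟩).1]
  rcases le_or_gt t b with htb | hbt
  · rw [hle htb, hle (hst.trans htb)]
    exact hf.chain s t hst htb
  obtain ⟨hπt, hdt⟩ := hh t ⟨hbt.le, htc⟩
  have ht : h t ∈ π ⁻¹' (γ '' Icc s t) := ⟨t, ⟨hst, le_rfl⟩, hπt.symm⟩
  rcases le_or_gt s b with hsb | hbs
  · rw [hle hsb, hgt hbt]
    refine ((hf.chain s b hsb le_rfl).mono le_rfl
      (preimage_mono (image_mono (Icc_subset_Icc_right hbt.le)))).trans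
      (EpsChainIn.of_dist_lt ?_ ht ?_)
    · exact ⟨b, ⟨hsb, hbt.le⟩, (hf.map_eq b le_rfl).symm⟩
    · linarith [dist_nonneg (x := f b) (y := h t)]
  · obtain ⟨hπs, hds⟩ := hh s ⟨hbs.le, hst.trans htc⟩
    rw [hgt hbs, hgt hbt]
    refine .of_dist_lt ⟨s, ⟨le_rfl, hst⟩, hπs.symm⟩ ht ?_
    linarith [dist_triangle_left (h s) (h t) (f b)]

variable [TopologicalSpace Z] {γ : I → Z}

theorem exists_isEpsLiftUpTo_one [PseudoMetricSpace Y] (hopen : IsOpenMap π)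
    (hclosed : IsClosedMap π) (hfin : ∀ z, (π ⁻¹' {z}).Finite) (hγ : Continuous γ) {y₀ : Y}
    (hy₀ : π y₀ = γ 0) {ε : ℝ} (hε : 0 < ε) :
    ∃ f, IsEpsLiftUpTo π γ ε 1 f ∧ f 0 = y₀ := by
  choose V hVopen hmem hV using fun z =>
    exists_isOpen_forall_exists_dist_lt hopen hclosed (hfin z) (half_pos hε)
  obtain ⟨u, hu0, hu, ⟨N, huN⟩, huV⟩ := exists_monotone_Icc_subset_open_cover_unitInterval
    (fun z => (hVopen z).preimage hγ) fun t _ => mem_iUnion.2 ⟨γ t, hmem (γ t)⟩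
  suffices ∀ n, ∃ f, IsEpsLiftUpTo π γ ε (u n) f ∧ f 0 = y₀ from huN N le_rfl ▸ this N
  intro n
  induction n with
  | zero =>
    have heq : ∀ t ≤ u 0, t = 0 := fun t ht => le_antisymm (hu0 ▸ ht) unitInterval.nonneg'
    refine ⟨fun _ => y₀, ⟨fun t ht => ?_, fun _ _ _ _ => .refl⟩, rfl⟩
    rw [heq t ht, hy₀]
  | succ n ih =>
    obtain ⟨f, hf, hf0⟩ := ih
    obtain ⟨z, hz⟩ := huV n
    obtain ⟨g, hg, hgf⟩ := hf.exists_extend (hu n.le_succ) hz (hV z)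
    exact ⟨g, hg, (hgf unitInterval.nonneg').trans hf0⟩

theorem exists_continuous_lift_of_finite_fibers [MetricSpace Y] (hopen : IsOpenMap π)
    (hclosed : IsClosedMap π) (hfin : ∀ z, (π ⁻¹' {z}).Finite) (hγ : Continuous γ) {y₀ : Y}
    (hy₀ : π y₀ = γ 0) :
    ∃ F : I → Y, Continuous F ∧ π ∘ F = γ ∧ F 0 = y₀ := by
  choose f hf hf0 using fun m : ℕ =>
    exists_isEpsLiftUpTo_one hopen hclosed hfin hγ hy₀ (Nat.one_div_pos_of_nat (n := m) (α := ℝ))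
  let U : Ultrafilter ℕ := hyperfilter ℕ
  have hlim : ∀ t, ∃ y ∈ π ⁻¹' {γ t}, ∀ᶠ m in U, f m t = y := fun t =>
    (Ultrafilter.eventually_exists_mem_iff (hfin (γ t))).1 <| .of_forall fun m =>
      ⟨f m t, (hf m).map_eq t unitInterval.le_one', rfl⟩
  choose F hπF hF using hlim
  have hmesh : Tendsto (fun m : ℕ => 1 / ((m : ℝ) + 1)) U (𝓝 0) :=
    tendsto_one_div_add_atTop_nhds_zero_nat.mono_left Nat.hyperfilter_le_atTop
  have hchain : ∀ ε > 0, ∀ s t, EpsChainIn ε (π ⁻¹' (γ '' uIcc s t)) (F s) (F t) := by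
    intro ε hε s t
    wlog hst : s ≤ t generalizing s t
    · exact uIcc_comm s t ▸ (this t s (le_of_not_ge hst)).symm
    obtain ⟨m, hms, hmt, hmε⟩ := ((hF s).and ((hF t).and (hmesh.eventually_le_const hε))).exists
    rw [uIcc_of_le hst, ← hms, ← hmt]
    exact ((hf m).chain s t hst unitInterval.le_one').mono hmε subset_rfl
  refine ⟨F, continuous_iff_continuousAt.2 fun t => Metric.tendsto_nhds.2 fun ρ hρ => ?_,
    funext hπF, ?_⟩
  · obtain ⟨ε, hε, V, hV, htrap⟩ :=
      exists_nhds_forall_epsChainIn_dist_lt hclosed (hfin (π (F t))) hρ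
    have hγV : γ ⁻¹' V ∈ 𝓝 t := hγ.continuousAt.preimage_mem_nhds (hπF t ▸ hV)
    filter_upwards [(tendsto_const_nhds.uIcc tendsto_id).eventually
      (eventually_smallSets.2 ⟨_, hγV, fun _ => id⟩)] with s hs
    exact htrap _ ((hchain ε hε t s).mono le_rfl (preimage_mono (image_subset_iff.2 hs)))
  · obtain ⟨m, hm⟩ := (hF 0).exists
    exact hm.symm.trans (hf0 m)

end PathLifting

theorem exists_perm_comp_eq_of_map_univ_eq {ι α : Type*} [Fintype ι] {a b : ι → α}
    (h : (Finset.univ : Finset ι).val.map a = Finset.univ.val.map b) :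
    ∃ e : Equiv.Perm ι, b ∘ e = a := by
  classical
  have hfibre : ∀ z, Nonempty ({i // a i = z} ≃ {i // b i = z}) := fun z => by
    have hcount := congrArg (Multiset.count z) h
    rw [Multiset.count_map, Multiset.count_map] at hcount
    refine ⟨Fintype.equivOfCardEq ?_⟩
    simpa only [Fintype.card_subtype, Finset.card_def, Finset.filter_val, eq_comm] using hcount
  exact ⟨Equiv.ofFiberEquiv fun z => (hfibre z).some, funext (Equiv.ofFiberEquiv_map _)⟩

theorem continuous_coeff_charpoly {ι R : Type*} [Fintype ι] [DecidableEq ι] [CommRing R]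
    [TopologicalSpace R] [IsTopologicalSemiring R] (k : ℕ) :
    Continuous fun A : Matrix ι ι R => A.charpoly.coeff k := by
  have hcoeff (A : Matrix ι ι R) :
      A.charpoly.coeff k = MvPolynomial.eval (fun ij => A ij.1 ij.2)
        ((Matrix.charpoly.univ R ι).coeff k) :=
    (Matrix.charpoly.univ_coeff_eval₂Hom ι (RingHom.id R) (fun ij => A ij.1 ij.2) k).symm
  simp only [hcoeff]
  exact (MvPolynomial.continuous_eval _).comp (by fun_prop)

theorem eq_of_monic_of_toFn_eq {R : Type*} [Semiring R] {n : ℕ} {p q : R[X]} (hp : p.Monic)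
    (hq : q.Monic) (hpn : p.natDegree = n) (hqn : q.natDegree = n)
    (h : Polynomial.toFn n p = Polynomial.toFn n q) : p = q := by
  ext k
  rcases lt_trichotomy k n with hk | rfl | hk
  · exact congrFun h ⟨k, hk⟩
  · have hpk : p.coeff k = 1 := hpn ▸ hp.coeff_natDegree
    have hqk : q.coeff k = 1 := hqn ▸ hq.coeff_natDegree
    rw [hpk, hqk]
  · rw [Polynomial.coeff_eq_zero_of_natDegree_lt (hpn ▸ hk),
      Polynomial.coeff_eq_zero_of_natDegree_lt (hqn ▸ hk)]

theorem exists_eq_prod_X_sub_C_of_monic {K : Type*} [CommRing K] [IsDomain K] {n : ℕ} {p : K[X]}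
    (hp : p.Monic) (hsplits : p.Splits) (hpn : p.natDegree = n) :
    ∃ a : Fin n → K, p = ∏ i, (Polynomial.X - Polynomial.C (a i)) := by
  obtain ⟨l, hl⟩ : ∃ l : List K, p.roots = l := ⟨_, (Multiset.coe_toList _).symm⟩
  have hlen : l.length = n := by
    rw [← Multiset.coe_card, ← hl, ← hsplits.natDegree_eq_card_roots, hpn]
  subst hlen
  refine ⟨l.get, (hsplits.eq_prod_roots_of_monic hp).trans ?_⟩
  rw [hl, Multiset.map_coe, Multiset.prod_coe]
  exact (Fin.prod_univ_fun_getElem l fun x => Polynomial.X - Polynomial.C x).symm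

/-- The map sending the roots `a` of a monic polynomial of degree `n` to its `n` coefficients below
the leading one. The leading coefficient is left out so that the map can be onto and open. -/
noncomputable def coeffsOfRoots {R : Type*} [CommRing R] {n : ℕ} (a : Fin n → R) : Fin n → R :=
  Polynomial.toFn n (∏ i, (Polynomial.X - Polynomial.C (a i)))

section CoeffsOfRoots

variable {K : Type*} {n : ℕ}

theorem coeffsOfRoots_eq_toFn_iff [CommRing K] [Nontrivial K] {a : Fin n → K} {p : K[X]}
    (hp : p.Monic) (hpn : p.natDegree = n) :
    coeffsOfRoots a = Polynomial.toFn n p ↔ p = ∏ i, (Polynomial.X - Polynomial.C (a i)) :=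
  ⟨fun h => eq_of_monic_of_toFn_eq hp (Polynomial.monic_prod_X_sub_C a _) hpn (by simp) h.symm,
    fun h => h ▸ rfl⟩

theorem continuous_coeffsOfRoots [CommRing K] [TopologicalSpace K] [IsTopologicalSemiring K] :
    Continuous (coeffsOfRoots : (Fin n → K) → Fin n → K) := by
  refine continuous_pi fun k => ?_
  have hdiag (a : Fin n → K) : coeffsOfRoots a k = (Matrix.diagonal a).charpoly.coeff k := by
    rw [Matrix.charpoly_diagonal]
    rfl
  simp only [hdiag]
  exact (continuous_coeff_charpoly k).comp continuous_id.matrix_diagonal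

theorem surjective_coeffsOfRoots [Field K] [IsAlgClosed K] :
    Function.Surjective (coeffsOfRoots : (Fin n → K) → Fin n → K) := by
  classical
  intro c
  let p : K[X] := Polynomial.X ^ n + Polynomial.ofFn n c
  have hdeg : (Polynomial.ofFn n c).degree < (Polynomial.X ^ n : K[X]).degree := by
    rw [Polynomial.degree_X_pow]
    exact Polynomial.ofFn_degree_lt c
  have hp : p.Monic := Polynomial.monic_X_pow_add (Polynomial.ofFn_degree_lt c)
  have hpn : p.natDegree = n := by
    rw [Polynomial.natDegree_add_eq_left_of_degree_lt hdeg, Polynomial.natDegree_X_pow]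
  have hpc : Polynomial.toFn n p = c := by
    ext k
    simp [p, Polynomial.toFn, Polynomial.coeff_X_pow, k.2.ne]
  obtain ⟨a, ha⟩ := exists_eq_prod_X_sub_C_of_monic hp (IsAlgClosed.splits p) hpn
  exact ⟨a, ((coeffsOfRoots_eq_toFn_iff hp hpn).2 ha).trans hpc⟩

theorem coeffsOfRoots_comp_perm [CommRing K] (a : Fin n → K) (e : Equiv.Perm (Fin n)) :
    coeffsOfRoots (a ∘ e) = coeffsOfRoots a :=
  congrArg (Polynomial.toFn n) (Equiv.prod_comp e fun i => Polynomial.X - Polynomial.C (a i))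

theorem coeffsOfRoots_eq_iff_exists_perm [CommRing K] [IsDomain K] {a b : Fin n → K} :
    coeffsOfRoots a = coeffsOfRoots b ↔ ∃ e : Equiv.Perm (Fin n), b ∘ e = a := by
  refine ⟨fun h => exists_perm_comp_eq_of_map_univ_eq ?_, ?_⟩
  · have hroots (c : Fin n → K) :
        (∏ i, (Polynomial.X - Polynomial.C (c i))).roots = Finset.univ.val.map c := by
      rw [← Polynomial.roots_multiset_prod_X_sub_C (Finset.univ.val.map c), Multiset.map_map]
      rfl
    have hprod := (coeffsOfRoots_eq_toFn_iff (Polynomial.monic_prod_X_sub_C b _) (by simp)).1 h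
    rw [← hroots, ← hroots, hprod]
  · rintro ⟨e, rfl⟩
    exact coeffsOfRoots_comp_perm b e

theorem finite_preimage_coeffsOfRoots [CommRing K] [IsDomain K] (c : Fin n → K) :
    (coeffsOfRoots ⁻¹' {c}).Finite := by
  rcases (coeffsOfRoots ⁻¹' {c}).eq_empty_or_nonempty with hempty | ⟨b, rfl⟩
  · exact hempty ▸ finite_empty
  · exact (finite_range fun e : Equiv.Perm (Fin n) => b ∘ e).subset fun a ha =>
      coeffsOfRoots_eq_iff_exists_perm.1 ha

theorem norm_le_norm_coeffsOfRoots_add_one [NormedField K] (a : Fin n → K) :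
    ‖a‖ ≤ ‖coeffsOfRoots a‖ + 1 := by
  refine (pi_norm_le_iff_of_nonneg (by positivity)).2 fun i => ?_
  let p : K[X] := ∏ i, (Polynomial.X - Polynomial.C (a i))
  have hp : p.Monic := Polynomial.monic_prod_X_sub_C a _
  have hpn : p.natDegree = n := by simp [p]
  have hroot : p.IsRoot (a i) := by
    rw [Polynomial.IsRoot, Polynomial.eval_prod]
    exact Finset.prod_eq_zero (Finset.mem_univ i) (by simp)
  have hcauchy : p.cauchyBound ≤ ‖coeffsOfRoots a‖₊ + 1 := by
    rw [Polynomial.cauchyBound, hp.leadingCoeff, nnnorm_one, div_one, hpn]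
    gcongr
    exact Finset.sup_le fun k hk =>
      nnnorm_le_pi_nnnorm (coeffsOfRoots a) ⟨k, Finset.mem_range.1 hk⟩
  exact_mod_cast (hroot.norm_lt_cauchyBound hp.ne_zero).le.trans hcauchy

theorem isClosedMap_coeffsOfRoots [NormedField K] [ProperSpace K] :
    IsClosedMap (coeffsOfRoots : (Fin n → K) → Fin n → K) := by
  refine (isProperMap_iff_tendsto_cocompact.2 ⟨continuous_coeffsOfRoots, ?_⟩).isClosedMap
  rw [← cobounded_eq_cocompact, ← tendsto_norm_atTop_iff_cobounded]
  refine tendsto_atTop_mono (fun a => ?_)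
    (tendsto_atTop_add_const_right _ (-1) tendsto_norm_cobounded_atTop)
  linarith [norm_le_norm_coeffsOfRoots_add_one a]

theorem isOpenMap_coeffsOfRoots [NormedField K] [ProperSpace K] [IsAlgClosed K] :
    IsOpenMap (coeffsOfRoots : (Fin n → K) → Fin n → K) := by
  intro U hU
  have hquot : IsQuotientMap (coeffsOfRoots : (Fin n → K) → Fin n → K) :=
    isClosedMap_coeffsOfRoots.isQuotientMap continuous_coeffsOfRoots surjective_coeffsOfRoots
  have hsaturation : coeffsOfRoots ⁻¹' (coeffsOfRoots '' U) =
      ⋃ e : Equiv.Perm (Fin n), (fun a => a ∘ e) ⁻¹' U := by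
    ext a
    simp only [mem_preimage, mem_image, mem_iUnion, coeffsOfRoots_eq_iff_exists_perm]
    constructor
    · rintro ⟨_, hb, e, rfl⟩
      exact ⟨e, hb⟩
    · rintro ⟨e, he⟩
      exact ⟨_, he, e, rfl⟩
  rw [← hquot.isOpen_preimage, hsaturation]
  exact isOpen_iUnion fun e => hU.preimage (by fun_prop)

theorem exists_continuous_roots [NormedField K] [ProperSpace K] [IsAlgClosed K] {p : I → K[X]}
    (hp : ∀ t, (p t).Monic) (hpn : ∀ t, (p t).natDegree = n)
    (hcont : ∀ k, Continuous fun t => (p t).coeff k) :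
    ∃ L : I → Fin n → K, Continuous L ∧
      ∀ t, p t = ∏ i, (Polynomial.X - Polynomial.C (L t i)) := by
  have hγ : Continuous fun t => Polynomial.toFn n (p t) := continuous_pi fun k => hcont k
  obtain ⟨a, ha⟩ := surjective_coeffsOfRoots (Polynomial.toFn n (p 0))
  obtain ⟨L, hL, hlift, -⟩ := exists_continuous_lift_of_finite_fibers isOpenMap_coeffsOfRoots
    isClosedMap_coeffsOfRoots finite_preimage_coeffsOfRoots hγ ha
  exact ⟨L, hL, fun t => (coeffsOfRoots_eq_toFn_iff (hp t) (hpn t)).1 (congrFun hlift t)⟩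

end CoeffsOfRoots

/-- continuous selection of eigenvalues. If `t ↦ X t` is a continuous
family of `r × r` complex matrices on `[0,1]`, then there are continuous functions
`λ_1,…,λ_r` on `[0,1]` which at each `t` are the eigenvalues of `X t` with algebraic
multiplicity, i.e. the characteristic polynomial factors as `∏ i (u − λ_i(t))`. -/
theorem continuous_eigenvalue_selection (r : ℕ)
    (X : ℝ → Matrix (Fin r) (Fin r) ℂ)
    (hX : ContinuousOn X (Set.Icc (0 : ℝ) 1)) :
    ∃ lam : Fin r → ℝ → ℂ,
      (∀ i, ContinuousOn (lam i) (Set.Icc (0 : ℝ) 1)) ∧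
      ∀ t ∈ Set.Icc (0 : ℝ) 1,
        (X t).charpoly = ∏ i : Fin r, (Polynomial.X - Polynomial.C (lam i t)) := by
  obtain ⟨L, hL, hroots⟩ := exists_continuous_roots (p := fun t : I => (X t).charpoly) (n := r)
    (fun t => (X t).charpoly_monic) (fun t => by simp)
    fun k => (continuous_coeff_charpoly k).comp hX.domRestrict
  refine ⟨fun i => IccExtend zero_le_one fun t => L t i, fun i => ?_, fun t ht => ?_⟩
  · exact ((continuous_apply i).comp hL).Icc_extend'.continuousOn
  · simp only [IccExtend_of_mem _ _ ht]
    exact hroots ⟨t, ht⟩
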